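/- The sum over k ≥ 1 of (2^{2k+1} / (3^{3k}(3k+1))) · C(3k+1, k) equals 1. -/

import Mathlib

/-!
Let `F` be the power series with the Fuss–Catalan numbers `C((r+1)k+1, k) / ((r+1)k+1)` as
coefficients. For `n ≥ 1` the coefficient of `y ^ n` in `(1 - y) F(y (1 - y) ^ r)` is, up to a
factor, the `n`-th difference of a polynomial of degree `n - 1`, hence zero, so
`(1 - y) F(y (1 - y) ^ r) = 1`. With `y` the compositional inverse of `X (1 - X) ^ r` this reads
`F = 1 / (1 - y)`, whence `F = 1 + X F ^ (r + 1)`.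

For `r ≥ 1`, at the critical point `c = r ^ r / (r + 1) ^ (r + 1)`, the line `t` is tangent to the
convex curve `1 + c t ^ (r + 1)` at `t = (r + 1) / r`. The functional equation therefore keeps the
partial sums of `F(c)` below `(r + 1) / r`, and `F(c)`, being a nonnegative solution of
`t = 1 + c t ^ (r + 1)`, equals `(r + 1) / r`. The fringe law of `(r + 1)`-ary trees is the series
`r F(c) = r + 1` without its term `r` at `k = 0`.
-/

open Finset PowerSeries

section PartialSums

variable {R : Type*} [CommSemiring R] [PartialOrder R] [IsOrderedRing R] {f g : R⟦X⟧}

lemma coeff_pow_nonneg (hf : ∀ k, 0 ≤ coeff k f) (d k : ℕ) : 0 ≤ coeff k (f ^ d) := by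
  rw [coeff_pow]
  exact sum_nonneg fun _ _ => prod_nonneg fun _ _ => hf _

lemma sum_coeff_mul_le (hf : ∀ k, 0 ≤ coeff k f) (hg : ∀ k, 0 ≤ coeff k g) (n : ℕ) :
    ∑ k ∈ range n, coeff k (f * g) ≤ (∑ k ∈ range n, coeff k f) * ∑ k ∈ range n, coeff k g := by
  simp_rw [coeff_mul, Nat.sum_antidiagonal_eq_sum_range_succ fun i j => coeff i f * coeff j g]
  rw [sum_range_diag_flip n fun i j => coeff i f * coeff j g, sum_mul_sum]
  gcongr with i _
  exacts [fun j _ _ => mul_nonneg (hf i) (hg j), Nat.sub_le n i]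

lemma sum_coeff_pow_le (hf : ∀ k, 0 ≤ coeff k f) (d n : ℕ) :
    ∑ k ∈ range n, coeff k (f ^ d) ≤ (∑ k ∈ range n, coeff k f) ^ d := by
  induction d with
  | zero =>
    simp only [pow_zero, coeff_one, sum_ite_eq', mem_range]
    split_ifs <;> simp
  | succ d ih =>
    rw [pow_succ, pow_succ]
    refine (sum_coeff_mul_le (coeff_pow_nonneg hf d) hf n).trans ?_
    gcongr
    exact sum_nonneg fun k _ => hf k

lemma sum_coeff_le_of_eq_one_add_smul_X_mul_pow {c M : R} {d : ℕ} (hf : ∀ k, 0 ≤ coeff k f)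
    (hc : 0 ≤ c) (hfd : f = 1 + c • (X * f ^ d)) (hM : 0 ≤ M) (hcM : 1 + c * M ^ d ≤ M) (n : ℕ) :
    ∑ k ∈ range n, coeff k f ≤ M := by
  have hcoeff_zero : coeff 0 f = 1 := by rw [hfd]; simp
  have hcoeff_succ (k : ℕ) : coeff (k + 1) f = c * coeff k (f ^ d) := by
    conv_lhs => rw [hfd]
    simp [coeff_one, coeff_succ_X_mul]
  induction n with
  | zero => simpa using hM
  | succ n ih =>
    calc ∑ k ∈ range (n + 1), coeff k f = 1 + c * ∑ k ∈ range n, coeff k (f ^ d) := by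
          simp_rw [sum_range_succ', hcoeff_zero, hcoeff_succ, mul_sum, add_comm]
      _ ≤ 1 + c * (∑ k ∈ range n, coeff k f) ^ d := by gcongr; exact sum_coeff_pow_le hf d n
      _ ≤ 1 + c * M ^ d := by
          have := sum_nonneg fun k (_ : k ∈ range n) => hf k
          gcongr
      _ ≤ M := hcM

end PartialSums

section Sums

variable {f g : ℝ⟦X⟧} {s t : ℝ}

lemma hasSum_coeff_one : HasSum (fun k => coeff k (1 : ℝ⟦X⟧)) 1 := by
  simpa only [coeff_one] using hasSum_ite_eq 0 (1 : ℝ)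

lemma hasSum_coeff_X : HasSum (fun k => coeff k (X : ℝ⟦X⟧)) 1 := by
  simpa only [coeff_X] using hasSum_ite_eq 1 (1 : ℝ)

lemma hasSum_coeff_mul (hf : HasSum (fun k => coeff k f) s) (hg : HasSum (fun k => coeff k g) t) :
    HasSum (fun k => coeff k (f * g)) (s * t) := by
  have hf' := hf.summable.norm
  have hg' := hg.summable.norm
  simp_rw [coeff_mul]
  rw [← hf.tsum_eq, ← hg.tsum_eq, tsum_mul_tsum_eq_tsum_sum_antidiagonal_of_summable_norm hf' hg']
  exact (summable_norm_sum_mul_antidiagonal_of_summable_norm hf' hg').of_norm.hasSum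

lemma hasSum_coeff_pow (hf : HasSum (fun k => coeff k f) s) (d : ℕ) :
    HasSum (fun k => coeff k (f ^ d)) (s ^ d) := by
  induction d with
  | zero => simpa only [pow_zero] using hasSum_coeff_one
  | succ d ih => simpa only [pow_succ] using hasSum_coeff_mul ih hf

lemma eq_one_add_mul_pow_of_hasSum_coeff {c : ℝ} {d : ℕ} (hfd : f = 1 + c • (X * f ^ d))
    (hf : HasSum (fun k => coeff k f) s) : s = 1 + c * s ^ d := by
  have hrhs : HasSum (fun k => coeff k (1 + c • (X * f ^ d))) (1 + c * (1 * s ^ d)) := by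
    simpa only [map_add, coeff_smul, smul_eq_mul] using hasSum_coeff_one.add
      ((hasSum_coeff_mul hasSum_coeff_X (hasSum_coeff_pow hf d)).mul_left c)
  rw [← hfd, one_mul] at hrhs
  exact hf.unique hrhs

end Sums

section CriticalPoint

/-- The radius of convergence of the power series solution of `F = 1 + X * F ^ (r + 1)`: for
`r ≠ 0`, the value of `c` at which `t = 1 + c * t ^ (r + 1)` has a double root `t > 0`. -/
noncomputable def criticalPoint (r : ℕ) : ℝ := r ^ r / (r + 1) ^ (r + 1)

variable {r : ℕ}

lemma criticalPoint_nonneg (r : ℕ) : 0 ≤ criticalPoint r := by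
  unfold criticalPoint
  positivity

lemma criticalPoint_mul_pow (hr : r ≠ 0) :
    criticalPoint r * ((r + 1) / r) ^ (r + 1) = 1 / r := by
  have : (r : ℝ) ≠ 0 := Nat.cast_ne_zero.2 hr
  rw [criticalPoint, div_pow, pow_succ (r : ℝ) r]
  field_simp

lemma one_add_mul_ne_one_add_pow {s : ℝ} (hr : r ≠ 0) (hs : -1 ≤ s) (hs0 : s ≠ 0) :
    1 + (r + 1) * s ≠ (1 + s) ^ (r + 1) := by
  have hlt := one_add_mul_self_lt_rpow_one_add hs hs0 (p := (r + 1 : ℕ))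
    (Nat.one_lt_cast.2 (by lia))
  rw [Real.rpow_natCast] at hlt
  exact_mod_cast hlt.ne

lemma eq_of_eq_one_add_criticalPoint_mul_pow (hr : r ≠ 0) {t : ℝ} (ht : 0 ≤ t)
    (h : t = 1 + criticalPoint r * t ^ (r + 1)) : t = (r + 1) / r := by
  have hr' : (0 : ℝ) < r := Nat.cast_pos.2 (Nat.pos_of_ne_zero hr)
  obtain ⟨s, rfl⟩ : ∃ s, t = (r + 1) / r * (1 + s) := ⟨r / (r + 1) * t - 1, by field_simp; ring⟩
  have hs : -1 ≤ s := by
    linarith [nonneg_of_mul_nonneg_right ht (div_pos (by positivity) hr')]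
  have hbernoulli : 1 + (r + 1) * s = (1 + s) ^ (r + 1) := by
    rw [mul_pow, ← mul_assoc, criticalPoint_mul_pow hr] at h
    field_simp at h
    linear_combination h
  have hs0 : s = 0 := by
    contrapose! hbernoulli
    exact one_add_mul_ne_one_add_pow hr hs hbernoulli
  rw [hs0, add_zero, mul_one]

theorem hasSum_coeff_of_eq_one_add_criticalPoint_smul {f : ℝ⟦X⟧} (hr : r ≠ 0)
    (hf : ∀ k, 0 ≤ coeff k f) (hfr : f = 1 + criticalPoint r • (X * f ^ (r + 1))) :
    HasSum (fun k => coeff k f) ((r + 1) / r) := by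
  have hroot : 1 + criticalPoint r * ((r + 1) / r) ^ (r + 1) ≤ (r + 1) / r := by
    rw [criticalPoint_mul_pow hr, add_div, div_self (Nat.cast_ne_zero.2 hr)]
  have hbound := sum_coeff_le_of_eq_one_add_smul_X_mul_pow hf (criticalPoint_nonneg r) hfr
    (by positivity) hroot
  have hsum := (summable_of_sum_range_le hf hbound).hasSum
  have htsum := eq_of_eq_one_add_criticalPoint_mul_pow hr (tsum_nonneg hf)
    (eq_one_add_mul_pow_of_hasSum_coeff hfr hsum)
  rwa [htsum] at hsum

end CriticalPoint

section Substitution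

variable {R : Type*} [CommRing R]

lemma coeff_mul_subst {a : R⟦X⟧} (ha : constantCoeff a = 0) (f g : R⟦X⟧) (n : ℕ) :
    coeff n (g * f.subst a) = ∑ k ∈ range (n + 1), coeff k f * coeff n (g * a ^ k) := by
  have hvanish {j k : ℕ} (hjk : j < k) : coeff j (a ^ k) = 0 :=
    X_pow_dvd_iff.1 (pow_dvd_pow_of_dvd (X_dvd_iff.2 ha) k) j hjk
  have hcoeff {j : ℕ} (hj : j ≤ n) :
      coeff j (f.subst a) = ∑ k ∈ range (n + 1), coeff k f * coeff j (a ^ k) := by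
    rw [coeff_subst' (.of_constantCoeff_zero' ha)]
    refine finsum_eq_sum_of_support_subset _ fun k hk => ?_
    rw [coe_range, Set.mem_Iio, Nat.lt_succ_iff]
    by_contra! hnk
    exact hk (by simp [hvanish (hj.trans_lt hnk)])
  simp_rw [coeff_mul, mul_sum]
  rw [sum_comm]
  refine sum_congr rfl fun ij hij => ?_
  rw [hcoeff (HasAntidiagonal.antidiagonal.snd_le hij), mul_sum]
  exact sum_congr rfl fun k _ => mul_left_comm _ _ _

lemma coeff_one_sub_X_pow (m j : ℕ) :
    coeff j ((1 - X : R⟦X⟧) ^ m) = (-1) ^ j * (m.choose j : R) := by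
  have h : (1 - X : R⟦X⟧) ^ m = rescale (-1) (((1 + Polynomial.X) ^ m : Polynomial R) : R⟦X⟧) := by
    simp [sub_eq_add_neg]
  rw [h, coeff_rescale, Polynomial.coeff_coe, Polynomial.coeff_one_add_X_pow]

lemma coeff_one_sub_X_mul_pow (r : ℕ) {k n : ℕ} (hk : k ≤ n) :
    coeff n ((1 - X : R⟦X⟧) * (X * (1 - X) ^ r) ^ k) =
      (-1) ^ (n - k) * ((r * k + 1).choose (n - k) : R) := by
  have h : (1 - X : R⟦X⟧) * (X * (1 - X) ^ r) ^ k = X ^ k * (1 - X) ^ (r * k + 1) := by ring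
  rw [h, coeff_X_pow_mul', if_pos hk, coeff_one_sub_X_pow]

lemma eq_one_add_X_mul_pow_of_one_sub_X_mul_subst {f : R⟦X⟧} {r : ℕ}
    (hf : (1 - X) * f.subst (X * (1 - X) ^ r : R⟦X⟧) = 1) : f = 1 + X * f ^ (r + 1) := by
  set p : R⟦X⟧ := X * (1 - X) ^ r with hp
  have hp0 : constantCoeff p = 0 := by simp [p]
  have hp1 : IsUnit (coeff 1 p) := by simp [p, coeff_succ_X_mul 0]
  set y := p.substInvOfIsUnit hp1
  have hy : HasSubst y := HasSubst.substInvOfIsUnit p hp1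
  have hpy : p.subst y = X := subst_substInvOfIsUnit_right p hp0 hp1
  have hX : y * (1 - y) ^ r = X := by
    calc y * (1 - y) ^ r = substAlgHom hy p := by simp [hp, substAlgHom_X hy]
      _ = X := by rw [coe_substAlgHom, hpy]
  have hfy : (1 - y) * f = 1 := by
    have hsubst : PowerSeries.subst y (f.subst p) = f := by
      rw [subst_comp_subst_apply (.of_constantCoeff_zero' hp0) hy, hpy, X_subst]
    have h := congrArg (substAlgHom hy) hf
    rwa [map_mul, map_sub, map_one, substAlgHom_X, coe_substAlgHom, hsubst] at h
  calc f = 1 + y * f := by linear_combination hfy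
    _ = 1 + y * ((1 - y) * f) ^ r * f := by rw [hfy, one_pow, mul_one]
    _ = 1 + y * (1 - y) ^ r * f ^ (r + 1) := by rw [mul_pow]; ring
    _ = 1 + X * f ^ (r + 1) := by rw [hX]

end Substitution

section FussCatalan

/-- The Fuss–Catalan number counting the `(r + 1)`-ary trees with `k` internal nodes. -/
noncomputable def fussCatalan (r k : ℕ) : ℝ :=
  (((r + 1) * k + 1).choose k : ℝ) / ((r + 1) * k + 1)

/-- The generating function of `(r + 1)`-ary trees by their number of internal nodes. -/
noncomputable def fussCatalanSeries (r : ℕ) : ℝ⟦X⟧ := .mk (fussCatalan r)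

lemma fussCatalan_zero (r : ℕ) : fussCatalan r 0 = 1 := by simp [fussCatalan]

lemma fussCatalan_nonneg (r k : ℕ) : 0 ≤ fussCatalan r k := by
  unfold fussCatalan
  positivity

lemma factorial_mul_choose_mul_choose (r : ℕ) {m k : ℕ} (hk : k ≤ m + 1) :
    (m + 1).factorial * (((r + 1) * k + 1).choose k * (r * k + 1).choose (m + 1 - k)) =
      ((r + 1) * k + 1) * (((r + 1) * k).descFactorial m * (m + 1).choose k) := by
  have h := Nat.choose_mul (n := (r + 1) * k + 1) hk
  rw [show (r + 1) * k + 1 - k = r * k + 1 by rw [add_mul]; lia] at h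
  rw [← h, ← mul_assoc, ← Nat.descFactorial_eq_factorial_mul_choose,
    Nat.succ_descFactorial_succ, mul_assoc]

lemma factorial_mul_fussCatalan_mul_choose (r : ℕ) {m k : ℕ} (hk : k ≤ m + 1) :
    (m + 1).factorial * (fussCatalan r k * (r * k + 1).choose (m + 1 - k)) =
      (((r + 1) * k).descFactorial m * (m + 1).choose k : ℝ) := by
  have h := congrArg (Nat.cast (R := ℝ)) (factorial_mul_choose_mul_choose r hk)
  push_cast at h
  rw [fussCatalan]
  field_simp
  linear_combination h

lemma sum_neg_one_pow_mul_choose_mul_eval_eq_zero {R : Type*} [CommRing R] {P : Polynomial R}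
    {n : ℕ} (hP : P.natDegree < n) :
    ∑ k ∈ range (n + 1), (-1) ^ (n - k) * (n.choose k : R) * P.eval (k : R) = 0 := by
  simpa [fwdDiff_iter_eq_sum_shift] using
    congrFun (Polynomial.fwdDiff_iter_eq_zero_of_degree_lt hP) 0

lemma sum_fussCatalan_mul_neg_one_pow_mul_choose (r m : ℕ) :
    ∑ k ∈ range (m + 2),
      fussCatalan r k * ((-1) ^ (m + 1 - k) * (r * k + 1).choose (m + 1 - k)) = 0 := by
  set P : Polynomial ℝ := (descPochhammer ℝ m).comp (Polynomial.C (r + 1 : ℝ) * Polynomial.X)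
  have hP : P.natDegree < m + 1 := by
    rw [Nat.lt_succ_iff]
    calc P.natDegree ≤ m * 1 := by
          grw [Polynomial.natDegree_comp_le, descPochhammer_natDegree,
            Polynomial.natDegree_C_mul_le,
            Polynomial.natDegree_X_le]
      _ = m := mul_one m
  have heval (k : ℕ) : P.eval (k : ℝ) = ((r + 1) * k).descFactorial m := by
    rw [← descPochhammer_eval_eq_descFactorial]
    simp [P]
  refine (mul_eq_zero_iff_left (Nat.cast_ne_zero.2 (m + 1).factorial_ne_zero)).1 ?_
  rw [← sum_neg_one_pow_mul_choose_mul_eval_eq_zero hP, mul_sum]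
  refine sum_congr rfl fun k hk => ?_
  rw [heval]
  linear_combination (-1) ^ (m + 1 - k) *
    factorial_mul_fussCatalan_mul_choose r (mem_range_succ_iff.1 hk)

lemma one_sub_X_mul_subst_fussCatalanSeries (r : ℕ) :
    (1 - X) * (fussCatalanSeries r).subst (X * (1 - X) ^ r : ℝ⟦X⟧) = 1 := by
  ext n
  have hcoeff : coeff n ((1 - X) * (fussCatalanSeries r).subst (X * (1 - X) ^ r : ℝ⟦X⟧)) =
      ∑ k ∈ range (n + 1),
        fussCatalan r k * ((-1) ^ (n - k) * (r * k + 1).choose (n - k)) := by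
    rw [coeff_mul_subst (by simp)]
    refine sum_congr rfl fun k hk => ?_
    rw [coeff_one_sub_X_mul_pow r (mem_range_succ_iff.1 hk), fussCatalanSeries, coeff_mk]
  rw [hcoeff, coeff_one]
  cases n with
  | zero => simp [fussCatalan_zero]
  | succ m => rw [sum_fussCatalan_mul_neg_one_pow_mul_choose, if_neg m.succ_ne_zero]

theorem fussCatalanSeries_eq_one_add_X_mul_pow (r : ℕ) :
    fussCatalanSeries r = 1 + X * fussCatalanSeries r ^ (r + 1) :=
  eq_one_add_X_mul_pow_of_one_sub_X_mul_subst (one_sub_X_mul_subst_fussCatalanSeries r)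

theorem hasSum_fussCatalan_mul_criticalPoint_pow {r : ℕ} (hr : r ≠ 0) :
    HasSum (fun k => fussCatalan r k * criticalPoint r ^ k) ((r + 1) / r) := by
  set f := rescale (criticalPoint r) (fussCatalanSeries r)
  have hcoeff (k : ℕ) : coeff k f = fussCatalan r k * criticalPoint r ^ k := by
    rw [coeff_rescale, fussCatalanSeries, coeff_mk, mul_comm]
  have hf : f = 1 + criticalPoint r • (X * f ^ (r + 1)) := by
    have h := congrArg (rescale (criticalPoint r)) (fussCatalanSeries_eq_one_add_X_mul_pow r)
    rwa [map_add, map_one, map_mul, map_pow, rescale_X, mul_assoc, ← smul_eq_C_mul] at h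
  simp_rw [← hcoeff]
  refine hasSum_coeff_of_eq_one_add_criticalPoint_smul hr (fun k => ?_) hf
  rw [hcoeff]
  exact mul_nonneg (fussCatalan_nonneg r k) (pow_nonneg (criticalPoint_nonneg r) k)

end FussCatalan

theorem fringe_size_law_sums_to_one_general {r : ℕ} (hr : r ≠ 0) :
    HasSum (fun k : ℕ => (r : ℝ) ^ (r * (k + 1) + 1) /
      ((r + 1) ^ ((r + 1) * (k + 1)) * ((r + 1) * (k + 1) + 1)) *
      (((r + 1) * (k + 1) + 1).choose (k + 1) : ℝ)) 1 := by
  have hr' : (r : ℝ) ≠ 0 := Nat.cast_ne_zero.2 hr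
  have h := ((hasSum_nat_add_iff' 1).2 (hasSum_fussCatalan_mul_criticalPoint_pow hr)).mul_left
    (r : ℝ)
  rw [sum_range_one, fussCatalan_zero, pow_zero, one_mul, mul_sub, mul_div_cancel₀ _ hr', mul_one,
    add_sub_cancel_left] at h
  refine h.congr_fun fun k => ?_
  rw [fussCatalan, criticalPoint, div_pow, ← pow_mul, ← pow_mul, pow_succ]
  push_cast
  field_simp

/-- The sum over `k ≥ 1` of `(2^{2k+1}/(3^{3k}(3k+1)))·C(3k+1,k)` equals 1. -/
theorem fringe_size_law_sums_to_one :
    (∑' k : ℕ, (2 : ℝ) ^ (2 * (k + 1) + 1) / (3 ^ (3 * (k + 1)) * (3 * (k + 1) + 1)) *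
      (Nat.choose (3 * (k + 1) + 1) (k + 1) : ℝ)) = 1 := by
  simpa [two_add_one_eq_three] using (fringe_size_law_sums_to_one_general two_ne_zero).tsum_eq
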